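/- If M is a set of edges of a graph G that is not a proper marker set (i.e., some non-isolated connected component of G contains no edge of M), then the number of consistent cuts (V1, V2) of G with M ⊆ E(G[V1]) is even. -/

import Mathlib

/-- A finite type carrying a fixed-point-free involution has even cardinality. -/
theorem Function.Involutive.even_natCard {α : Type*} [Finite α] {f : α → α}
    (hf : Function.Involutive f) (hfix : ∀ a, f a ≠ a) : Even (Nat.card α) := by
  classical
  have := Fintype.ofFinite α
  have h : ∑ _a : α, (1 : ZMod 2) = 0 :=
    Finset.sum_involution (fun a _ => f a) (fun _ _ => by decide) (fun a _ _ => hfix a)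
      (fun _ _ => Finset.mem_univ _) (fun a _ => hf a)
  rw [Nat.card_eq_fintype_card, ← ZMod.natCast_eq_zero_iff_even]
  simpa using h

/-- If `M ⊆ E(G)` is not a proper marker set (some non-isolated connected component of
`G` contains no edge of `M`), then the number of consistent cuts `(V1, V2)` of `G` with
`M ⊆ E(G[V1])` is even. -/
theorem copath_stmt2 {V : Type*} [Fintype V] (G : SimpleGraph V) (M : Set (Sym2 V))
    (hM : M ⊆ G.edgeSet)
    (notProper : ∃ v : V, (∃ w, G.Adj v w) ∧
      ¬ ∃ u w : V, G.Adj u w ∧ s(u, w) ∈ M ∧ G.Reachable v u) :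
    Even (Nat.card {A : Set V // (∀ u v : V, G.Adj u v → (u ∈ A ↔ v ∈ A)) ∧
        (∀ v : V, (∀ w : V, ¬ G.Adj v w) → v ∈ A) ∧
        (∀ u w : V, s(u, w) ∈ M → u ∈ A ∧ w ∈ A)}) := by
  obtain ⟨v, ⟨w, hvw⟩, hno⟩ := notProper
  let C : Set V := {x | G.Reachable v x}
  have hvC : v ∈ C := SimpleGraph.Reachable.refl v
  have hC : ∀ x y, G.Adj x y → (x ∈ C ↔ y ∈ C) := fun x y hxy =>
    ⟨fun h => h.trans hxy.reachable, fun h => h.trans hxy.symm.reachable⟩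
  have hisol : ∀ x, (∀ y, ¬ G.Adj x y) → x ∉ C := by
    rintro x hx ⟨p⟩
    cases p.reverse with
    | nil => exact hx w hvw
    | cons h _ => exact hx _ h
  have hmark : ∀ x y, s(x, y) ∈ M → x ∉ C ∧ y ∉ C := by
    intro x y hxy
    have hadj : G.Adj x y := hM hxy
    have hx : x ∉ C := fun h => hno ⟨x, y, hadj, hxy, h⟩
    exact ⟨hx, fun h => hx ((hC x y hadj).2 h)⟩
  refine Function.Involutive.even_natCard (f := fun A => ⟨symmDiff A.1 C, ?_, ?_, ?_⟩) ?_ ?_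
  · intro x y hxy
    rw [Set.mem_symmDiff, Set.mem_symmDiff, A.2.1 x y hxy, hC x y hxy]
  · exact fun x hx => Or.inl ⟨A.2.2.1 x hx, hisol x hx⟩
  · intro x y hxy
    have hA := A.2.2.2 x y hxy
    have hxyC := hmark x y hxy
    exact ⟨Or.inl ⟨hA.1, hxyC.1⟩, Or.inl ⟨hA.2, hxyC.2⟩⟩
  · exact fun A => Subtype.ext (symmDiff_symmDiff_cancel_right C A.1)
  · intro A hA
    have hempty : C = ∅ := symmDiff_eq_left.1 (congrArg Subtype.val hA)
    exact Set.notMem_empty v (hempty ▸ hvC)
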